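/- Let N/ℚ be a Galois extension of number fields with Gal(N/ℚ) isomorphic to PSL₂(𝔽₇), and let K₇ₐ and K₇ᵦ be any two subfields of N of degree 7 over ℚ. Then the discriminants of K₇ₐ and K₇ᵦ are equal: D_{K₇ₐ} = D_{K₇ᵦ}. -/

import Mathlib

open scoped MatrixGroups NumberField

/-!
Let `N / ℚ` be Galois with group `G` and let `K` be a subfield. The different of `N / K` is the
product, over the nontrivial `h ∈ Gal(N / K)`, of the ideals generated by the displacements
`h b - b`. One inclusion is a Lagrange interpolation argument with the trace; the other is checked
at one prime at a time, where the ring of integers has a generator `x` and the different is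
generated by the derivative of the minimal polynomial at `x`, that is, by `∏ (x - h x)`.
The norms of these ideals form a class function on `G`, so together with `|D_N|` the numbers of
fixed points of the elements of `G` on the embeddings `K → N` determine `|D_K|`. The sign of `D_K`
is determined by the number of embeddings fixed by a complex conjugation.

It remains to see that all transitive actions of `SL₂(𝔽₇)` on seven points have the same
fixed-point counts: `-1` acts trivially, elements of order `7` have no fixed points because the
stabilizers have order `48`, and the remaining elements are conjugate if they have equal traces, so
that Burnside's lemma and the parity of the count at elements of order `8` leave one possibility.
-/

section LocalGenerator

open Polynomial

variable {A B : Type*} [CommRing A] [CommRing B] [Algebra A B]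

section

variable [IsDedekindDomain B] {P : Ideal B}

lemma pow_notMem_pow_succ [P.IsPrime] (hP : P ≠ ⊥) {ϖ : B} (hϖ : ϖ ∈ P) (hϖ₂ : ϖ ∉ P ^ 2) (n : ℕ) :
    ϖ ^ n ∉ P ^ (n + 1) := by
  have hprime : Prime P := Ideal.prime_of_isPrime hP inferInstance
  have hone : emultiplicity P (Ideal.span {ϖ}) = (1 : ℕ) := by
    rw [emultiplicity_eq_coe, pow_one, Ideal.dvd_span_singleton, Ideal.dvd_span_singleton]
    exact ⟨hϖ, hϖ₂⟩
  have hpow : emultiplicity P (Ideal.span {ϖ ^ n}) = n := by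
    rw [← Ideal.span_singleton_pow, emultiplicity_pow hprime, hone, Nat.cast_one, mul_one]
  rw [← Ideal.dvd_span_singleton]
  exact (emultiplicity_eq_coe.mp hpow).2

lemma exists_mem_sub_mem_pow [P.IsPrime] (hP : P ≠ ⊥) (S : Subalgebra A B)
    (hS : ∀ b, ∃ c ∈ S, b - c ∈ P) {ϖ : B} (hϖS : ϖ ∈ S) (hϖ : ϖ ∈ P) (hϖ₂ : ϖ ∉ P ^ 2)
    (n : ℕ) (b : B) : ∃ c ∈ S, b - c ∈ P ^ n := by
  induction n with
  | zero => exact ⟨0, S.zero_mem, by simp⟩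
  | succ n ih =>
    obtain ⟨c, hc, hbc⟩ := ih
    obtain ⟨d, e, he, hde⟩ := Ideal.exists_mul_add_mem_pow_succ hP (ϖ ^ n) (b - c)
      (Ideal.pow_mem_pow hϖ n) (pow_notMem_pow_succ hP hϖ hϖ₂ n) hbc
    obtain ⟨a, ha, hda⟩ := hS d
    refine ⟨c + ϖ ^ n * a, add_mem hc (mul_mem (pow_mem hϖS n) ha), ?_⟩
    have hsplit : b - (c + ϖ ^ n * a) = ϖ ^ n * (d - a) + e := by linear_combination -hde
    rw [hsplit]
    exact add_mem (pow_succ P n ▸ Ideal.mul_mem_mul (Ideal.pow_mem_pow hϖ n) hda) he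

end

lemma exists_ne_zero_adjoin_eq_top (F E : Type*) [Field F] [Field E] [Algebra F E]
    [FiniteDimensional F E] [Algebra.IsSeparable F E] :
    ∃ α : E, α ≠ 0 ∧ Algebra.adjoin F {α} = ⊤ := by
  obtain ⟨α, hα⟩ := Field.exists_primitive_element F E
  rw [IntermediateField.adjoin_eq_top_iff] at hα
  rcases eq_or_ne α 0 with rfl | hne
  · refine ⟨1, one_ne_zero, ?_⟩
    rwa [Algebra.adjoin_singleton_zero, ← Algebra.adjoin_singleton_one] at hα
  · exact ⟨α, hne, hα⟩

section

variable [IsDedekindDomain B] (P : Ideal B) [P.IsMaximal]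

lemma exists_aeval_mem_and_notMem_sq (hP : P ≠ ⊥) (x : B) (f : A[X]) (hf : aeval x f ∈ P)
    (hf' : aeval x (derivative f) ∉ P) :
    ∃ y : B, y - x ∈ P ∧ aeval y f ∈ P ∧ aeval y f ∉ P ^ 2 := by
  by_cases hf₂ : aeval x f ∈ P ^ 2
  · obtain ⟨ϖ, hϖ, hϖ₂⟩ : ∃ ϖ ∈ P, ϖ ∉ P ^ 2 := by
      simpa using SetLike.exists_of_lt (Ideal.pow_succ_lt_pow hP 1)
    obtain ⟨k, hk⟩ := (f.map (algebraMap A B)).binomExpansion x ϖ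
    have hTaylor : aeval (x + ϖ) f = aeval x f + aeval x (derivative f) * ϖ + k * ϖ ^ 2 := by
      simpa [derivative_map, eval_map_algebraMap] using hk
    have hquad : aeval x f + k * ϖ ^ 2 ∈ P ^ 2 :=
      add_mem hf₂ (Ideal.mul_mem_left _ _ (Ideal.pow_mem_pow hϖ 2))
    refine ⟨x + ϖ, by simpa, ?_, fun hmem ↦ ?_⟩
    · rw [hTaylor]
      exact add_mem (add_mem hf (Ideal.mul_mem_left _ _ hϖ))
        (Ideal.mul_mem_left _ _ (Ideal.pow_mem_of_mem _ hϖ 2 two_pos))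
    · have hlin : aeval x (derivative f) * ϖ ∈ P ^ 2 := by
        convert sub_mem hmem hquad using 1
        rw [hTaylor]
        ring
      exact (Ideal.IsPrime.mul_mem_pow P hlin).elim hf' hϖ₂
  · exact ⟨x, by simp, hf, hf₂⟩

attribute [local instance] Ideal.Quotient.field in
lemma exists_residue_generator [Module.Finite A B] (hP : P ≠ ⊥)
    [(P.under A).IsMaximal] [Algebra.IsSeparable (A ⧸ P.under A) (B ⧸ P)] :
    ∃ x : B, x ∉ P ∧ (∀ b, ∃ c ∈ Algebra.adjoin A {x}, b - c ∈ P) ∧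
      ∃ f : A[X], aeval x f ∈ P ∧ aeval x f ∉ P ^ 2 := by
  obtain ⟨α, hα, htop⟩ := exists_ne_zero_adjoin_eq_top (A ⧸ P.under A) (B ⧸ P)
  obtain ⟨x, rfl⟩ := Ideal.Quotient.mk_surjective α
  have hred (y : B) (f : A[X]) : Ideal.Quotient.mk P (aeval y f) =
      aeval (Ideal.Quotient.mk P y) (f.map (Ideal.Quotient.mk (P.under A))) := by
    rw [← Ideal.Quotient.algebraMap_eq (P.under A), aeval_map_algebraMap,
      ← Ideal.Quotient.algebraMap_eq P, aeval_algebraMap_apply]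
  obtain ⟨f, hf⟩ := Polynomial.map_surjective _ Ideal.Quotient.mk_surjective
    (minpoly (A ⧸ P.under A) (Ideal.Quotient.mk P x))
  have hsep := Algebra.IsSeparable.isSeparable (A ⧸ P.under A) (Ideal.Quotient.mk P x)
  obtain ⟨y, hyx, hy, hy₂⟩ := exists_aeval_mem_and_notMem_sq P hP x f
    (by rw [← Ideal.Quotient.eq_zero_iff_mem, hred, hf, minpoly.aeval])
    (by
      rw [← Ideal.Quotient.eq_zero_iff_mem, hred, ← derivative_map, hf]
      exact hsep.aeval_derivative_ne_zero (minpoly.aeval _ _))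
  have hyx' : Ideal.Quotient.mk P y = Ideal.Quotient.mk P x := Ideal.Quotient.eq.mpr hyx
  refine ⟨y, ?_, fun b ↦ ?_, f, hy, hy₂⟩
  · rwa [← Ideal.Quotient.eq_zero_iff_mem, hyx']
  · have hb : Ideal.Quotient.mk P b ∈ Algebra.adjoin (A ⧸ P.under A) {Ideal.Quotient.mk P x} :=
      htop ▸ Algebra.mem_top
    rw [Algebra.adjoin_singleton_eq_range_aeval] at hb
    obtain ⟨q, hq⟩ := hb
    obtain ⟨q, rfl⟩ := Polynomial.map_surjective _ Ideal.Quotient.mk_surjective q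
    refine ⟨aeval y q, aeval_mem_adjoin_singleton A y, ?_⟩
    rw [← Ideal.Quotient.eq, hred, hyx']
    exact hq.symm

end

lemma exists_forall_smul_eq_zero_and_sub_pow_mem {A S M : Type*} [CommRing A] [CommRing S]
    [Algebra A S] [AddCommGroup M] [Module A M] [Module S M] [IsScalarTower A S M]
    [Module.Finite A M] (p : Ideal A) (z : S) (h : ∀ m : M, z • m ∈ p • (⊤ : Submodule A M)) :
    ∃ s : S, (∀ m : M, s • m = 0) ∧ ∃ k : ℕ, s - z ^ k ∈ p.map (algebraMap A S) := by
  obtain ⟨q, hmonic, -, hcoeff, hq⟩ :=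
    LinearMap.exists_monic_and_natDegree_eq_and_coeff_mem_pow_and_aeval_eq_zero A
      (Algebra.lsmul A A M z) p (by rintro _ ⟨m, rfl⟩; exact h m)
  rw [aeval_algHom_apply] at hq
  refine ⟨aeval z q, fun m ↦ LinearMap.congr_fun hq m, q.natDegree, ?_⟩
  rw [aeval_eq_sum_range, Finset.sum_range_succ, hmonic.coeff_natDegree, one_smul,
    add_sub_cancel_right]
  refine sum_mem fun k hk ↦ ?_
  rw [Algebra.smul_def]
  exact Ideal.mul_mem_right _ _ <| Ideal.mem_map_of_mem _ <|
    Ideal.pow_le_self (Nat.sub_ne_zero_of_lt (Finset.mem_range.mp hk)) (hcoeff k)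

-- Multiplication by `z` maps `B ⧸ S` into `p • (B ⧸ S)`, so Cayley-Hamilton applies to it.
lemma exists_forall_mul_mem_and_sub_pow_mem [Module.Finite A B] (S : Subalgebra A B)
    (p : Ideal A) (z : S) (h : ∀ b, ∃ c ∈ S, z * b - c ∈ p.map (algebraMap A B)) :
    ∃ s : B, (∀ b, s * b ∈ S) ∧ ∃ k : ℕ, s - z ^ k ∈ p.map (algebraMap A B) := by
  let π := (Algebra.linearMap S B).range.mkQ
  have hπ (b : B) : π b = 0 ↔ b ∈ S := by
    simp [π, Algebra.algebraMap_eq_smul_one, Subalgebra.smul_def]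
  have hz (m : B ⧸ (Algebra.linearMap S B).range) : z • m ∈ p • (⊤ : Submodule A _) := by
    obtain ⟨b, rfl⟩ := Submodule.mkQ_surjective _ m
    obtain ⟨c, hc, hbc⟩ := h b
    have hmk : π (z * b - c) = z • π b := by
      rw [π.map_sub, (hπ c).mpr hc, sub_zero, ← π.map_smul, Subalgebra.smul_def, smul_eq_mul]
    rw [← Submodule.restrictScalars_mem A, ← Ideal.smul_top_eq_map] at hbc
    have hmem := Submodule.mem_map_of_mem (f := π.restrictScalars A) hbc
    rw [Submodule.map_smul''] at hmem
    exact hmk ▸ Submodule.smul_mono le_rfl le_top hmem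
  obtain ⟨s, hs, k, hk⟩ := exists_forall_smul_eq_zero_and_sub_pow_mem p z hz
  refine ⟨s, fun b ↦ ?_, k, ?_⟩
  · rw [← hπ, ← smul_eq_mul, ← Subalgebra.smul_def, π.map_smul, hs]
  · simpa [Ideal.map_map, ← IsScalarTower.algebraMap_eq] using
      Ideal.mem_map_of_mem (algebraMap S B) hk

lemma exists_sub_mem_sq_and_forall_mem [IsDedekindDomain B] {P I : Ideal B} [P.IsPrime]
    (hI : I ≠ ⊥) (hIP : I ≤ P) (x : B) :
    ∃ y, y - x ∈ P ^ 2 ∧ ∀ Q : Ideal B, Q.IsPrime → I ≤ Q → Q ≠ P → y ∈ Q := by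
  classical
  have hmem (Q : Ideal B) : Q ∈ (UniqueFactorizationMonoid.normalizedFactors I).toFinset ↔
      Q.IsPrime ∧ I ≤ Q := by
    rw [Multiset.mem_toFinset, Ideal.mem_normalizedFactors_iff hI]
  obtain ⟨y, hy⟩ := IsDedekindDomain.exists_forall_sub_mem_ideal
    (s := (UniqueFactorizationMonoid.normalizedFactors I).toFinset) id (fun _ ↦ 2)
    (fun Q hQ ↦ UniqueFactorizationMonoid.prime_of_normalized_factor Q
      (Multiset.mem_toFinset.mp hQ))
    (fun _ _ _ _ ↦ id) (fun Q ↦ if (Q : Ideal B) = P then x else 0)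
  refine ⟨y, by simpa using hy P ((hmem P).mpr ⟨inferInstance, hIP⟩), fun Q hQ hIQ hne ↦ ?_⟩
  have hyQ := hy Q ((hmem Q).mpr ⟨hQ, hIQ⟩)
  rw [if_neg hne, sub_zero] at hyQ
  exact Ideal.pow_le_self two_ne_zero hyQ

lemma aeval_sub_aeval_mem {I : Ideal B} {x y : B} (h : y - x ∈ I) (f : A[X]) :
    aeval y f - aeval x f ∈ I := by
  rw [← eval_map_algebraMap, ← eval_map_algebraMap]
  exact I.mem_of_dvd (sub_dvd_eval_sub y x _) h

lemma exists_pow_mul_sub_mem_map [IsDedekindDomain B] {P : Ideal B} [P.IsPrime] (hP : P ≠ ⊥)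
    {x : B}
    (hx : ∀ Q : Ideal B, Q.IsPrime → (P.under A).map (algebraMap A B) ≤ Q → Q ≠ P → x ∈ Q)
    (hsurj : ∀ b, ∃ c ∈ Algebra.adjoin A {x}, b - c ∈ P)
    {f : A[X]} (hf : aeval x f ∈ P) (hf₂ : aeval x f ∉ P ^ 2) :
    ∃ n : ℕ, ∀ b, ∃ c ∈ Algebra.adjoin A {x},
      x ^ n * b - c ∈ (P.under A).map (algebraMap A B) := by
  have hrad : Ideal.span {x} * P ≤ ((P.under A).map (algebraMap A B)).radical := by
    rw [Ideal.radical_eq_sInf]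
    refine le_sInf fun Q ⟨hQ, hQprime⟩ ↦ ?_
    by_cases hQP : Q = P
    · exact hQP ▸ Ideal.mul_le_right
    · exact Ideal.mul_le_left.trans <|
        (Ideal.span_singleton_le_iff_mem _).mpr (hx Q hQprime hQ hQP)
  obtain ⟨n, hn⟩ := Ideal.exists_pow_le_of_le_radical_of_fg hrad (IsNoetherian.noetherian _)
  refine ⟨n, fun b ↦ ?_⟩
  obtain ⟨c, hc, hbc⟩ := exists_mem_sub_mem_pow hP (Algebra.adjoin A {x}) hsurj
    (aeval_mem_adjoin_singleton A x) hf hf₂ n b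
  refine ⟨x ^ n * c, mul_mem (pow_mem (Algebra.self_mem_adjoin_singleton A x) n) hc, hn ?_⟩
  rw [← mul_sub, mul_pow, Ideal.span_singleton_pow]
  exact Ideal.mul_mem_mul (Ideal.mem_span_singleton_self _) hbc

attribute [local instance] Ideal.Quotient.field in
theorem exists_not_conductor_le [IsDomain A] [IsDedekindDomain B] [Module.Finite A B]
    [FaithfulSMul A B] (P : Ideal B) [P.IsMaximal] (hP : P ≠ ⊥) [(P.under A).IsMaximal]
    [Algebra.IsSeparable (A ⧸ P.under A) (B ⧸ P)] :
    ∃ x : B, ¬ conductor A x ≤ P := by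
  obtain ⟨x, hxP, hx, f, hf, hf₂⟩ := exists_residue_generator (A := A) P hP
  obtain ⟨y, hyx, hy⟩ := exists_sub_mem_sq_and_forall_mem
    (Ideal.map_ne_bot_of_ne_bot (Ideal.under_ne_bot A hP)) Ideal.map_comap_le x
  have hle : P ^ 2 ≤ P := Ideal.pow_le_self two_ne_zero
  have hyP : y ∉ P := fun hyP ↦ hxP ((Submodule.sub_mem_iff_right _ hyP).mp (hle hyx))
  have hysurj (b : B) : ∃ c ∈ Algebra.adjoin A {y}, b - c ∈ P := by
    obtain ⟨_, hc, hbc⟩ := hx b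
    rw [Algebra.adjoin_singleton_eq_range_aeval] at hc
    obtain ⟨q, rfl⟩ := hc
    refine ⟨aeval y q, aeval_mem_adjoin_singleton A y, ?_⟩
    rw [← sub_sub_sub_cancel_right _ _ (aeval x q)]
    exact sub_mem hbc (aeval_sub_aeval_mem (hle hyx) q)
  have hyf := aeval_sub_aeval_mem hyx f
  obtain ⟨n, hn⟩ := exists_pow_mul_sub_mem_map hP hy hysurj (f := f)
    ((Submodule.sub_mem_iff_left _ hf).mp (hle hyf))
    (fun hmem ↦ hf₂ ((Submodule.sub_mem_iff_right _ hmem).mp hyf))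
  obtain ⟨s, hs, k, hk⟩ := exists_forall_mul_mem_and_sub_pow_mem (Algebra.adjoin A {y})
    (P.under A) ⟨y ^ n, pow_mem (Algebra.self_mem_adjoin_singleton A y) n⟩ hn
  refine ⟨y, fun hcond ↦ hyP ?_⟩
  have hsP : s ∈ P := hcond (mem_conductor_iff.mpr hs)
  have hpow := (Submodule.sub_mem_iff_right _ hsP).mp (Ideal.map_comap_le hk)
  exact ‹P.IsMaximal›.isPrime.mem_of_pow_mem _ (‹P.IsMaximal›.isPrime.mem_of_pow_mem _ hpow)

end LocalGenerator

section Different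

open Polynomial

variable {G : Type*} [Group G]

/-- The ideal of `B` generated by the displacements `g • b - b`, that is, the smallest ideal modulo
which `g` acts trivially. Its prime divisors are the primes whose inertia group contains `g`. -/
def displacementIdeal (B : Type*) [CommRing B] [MulSemiringAction G B] (g : G) : Ideal B :=
  Ideal.span (Set.range fun b : B ↦ g • b - b)

section Conj

variable {B : Type*} [CommRing B] [MulSemiringAction G B]

lemma smul_sub_mem_displacementIdeal (g : G) (b : B) : g • b - b ∈ displacementIdeal B g :=
  Ideal.subset_span ⟨b, rfl⟩

lemma displacementIdeal_conj (k g : G) : displacementIdeal B (k * g * k⁻¹) =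
    (displacementIdeal B g).map (MulSemiringAction.toRingEquiv G B k) := by
  rw [displacementIdeal, displacementIdeal, Ideal.map_span, ← Set.range_comp,
    ← (MulAction.toPerm k).surjective.range_comp]
  congr 2
  ext b
  simp [smul_sub, mul_smul]

lemma absNorm_map_ringEquiv [IsDedekindDomain B] [Module.Free ℤ B] (e : B ≃+* B)
    (I : Ideal B) : Ideal.absNorm (I.map e) = Ideal.absNorm I := by
  rw [Ideal.absNorm_apply, Ideal.absNorm_apply]
  exact (Nat.card_congr (Ideal.quotientEquiv I (I.map e) e rfl).toEquiv).symm

lemma absNorm_displacementIdeal_conj [IsDedekindDomain B] [Module.Free ℤ B] (k g : G) :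
    Ideal.absNorm (displacementIdeal B (k * g * k⁻¹)) =
      Ideal.absNorm (displacementIdeal B g) := by
  rw [displacementIdeal_conj, absNorm_map_ringEquiv]

end Conj

variable (A K L : Type*) {B : Type*} [CommRing A] [Field K] [Algebra A K] [Field L] [Algebra K L]
  [Algebra A L] [IsScalarTower A K L]
  [CommRing B] [Algebra A B] [Algebra B L] [IsScalarTower A B L]

lemma adjoin_eq_top_of_conductor_ne_bot [IsFractionRing B L]
    [Algebra.IsAlgebraic K L] {x : B} (hx : conductor A x ≠ ⊥) :
    Algebra.adjoin K {algebraMap B L x} = ⊤ := by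
  obtain ⟨s, hs, hs0⟩ := (Submodule.ne_bot_iff _).mp hx
  have hle : Algebra.adjoin A {x} ≤ ((Algebra.adjoin K {algebraMap B L x}).restrictScalars A).comap
      (IsScalarTower.toAlgHom A B L) :=
    Algebra.adjoin_le (Set.singleton_subset_iff.mpr (Algebra.self_mem_adjoin_singleton K _))
  have hinv {y : L} (hy : y ∈ Algebra.adjoin K {algebraMap B L x}) :
      y⁻¹ ∈ Algebra.adjoin K {algebraMap B L x} :=
    Subalgebra.inv_mem_of_algebraic (x := ⟨y, hy⟩) _ (Algebra.IsAlgebraic.isAlgebraic y)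
  have hmul (b : B) : algebraMap B L s * algebraMap B L b ∈ Algebra.adjoin K {algebraMap B L x} :=
    map_mul (algebraMap B L) s b ▸ hle (mem_conductor_iff.mp hs b)
  rw [eq_top_iff]
  rintro y -
  obtain ⟨a, b, -, rfl⟩ := IsFractionRing.div_surjective B y
  rw [← mul_div_mul_left _ _ ((FaithfulSMul.algebraMap_eq_zero_iff B L).not.mpr hs0),
    div_eq_mul_inv]
  exact mul_mem (hmul a) (hinv (hmul b))

variable [Fintype G] [MulSemiringAction G L] [MulSemiringAction G B]

-- For `S = G \ {1}` only the term `h = 1` survives, so `∏ (g • x g - x g) * c * y` is integral.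
lemma sum_prod_mul_smul_mem_one [IsGaloisGroup G K L] [SMulDistribClass G B L] {y : L}
    (hy : y ∈ Submodule.traceDual A K (1 : Submodule B L)) (x : G → B) (S : Finset G) (c : B) :
    ∑ h : G, algebraMap B L (∏ g ∈ S, (g • x g - h • x g)) * h • (algebraMap B L c * y) ∈
      (1 : Submodule B L) := by
  have := IsGaloisGroup.isGalois G K L
  have := IsGaloisGroup.finiteDimensional G K L
  classical
  induction S using Finset.induction_on generalizing c with
  | empty =>
    obtain ⟨a, ha⟩ := Submodule.mem_traceDual.mp hy _ (Submodule.mem_one.mpr ⟨c, rfl⟩)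
    refine Submodule.mem_one.mpr ⟨algebraMap A B a, ?_⟩
    rw [← IsScalarTower.algebraMap_apply, IsScalarTower.algebraMap_apply A K L, ha,
      Algebra.traceForm_apply, trace_eq_sum_automorphisms,
      ← (IsGaloisGroup.mulEquivAlgEquiv G K L).toEquiv.sum_comp]
    simp [mul_comm]
  | insert g S hg ih =>
    convert sub_mem (Submodule.smul_mem _ (g • x g) (ih c)) (ih (x g * c)) using 1
    rw [Finset.smul_sum, ← Finset.sum_sub_distrib]
    refine Finset.sum_congr rfl fun h _ ↦ ?_
    rw [Finset.prod_insert hg, Algebra.smul_def]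
    simp only [map_mul, map_sub, smul_mul', algebraMap.smul']
    ring

variable [IsFractionRing A K] [IsDomain A] [IsIntegrallyClosed A] [IsDedekindDomain B]
  [Module.IsTorsionFree A B]

lemma map_minpoly_eq_charpoly [IsGaloisGroup G K L] [IsGaloisGroup G A B] {x : B}
    (hx : Algebra.adjoin K {algebraMap B L x} = ⊤) :
    (minpoly A x).map (algebraMap A B) = MulSemiringAction.charpoly G x := by
  have := IsGaloisGroup.isGalois G K L
  have := IsGaloisGroup.finiteDimensional G K L
  have hint : IsIntegral A x := (Algebra.IsInvariant.isIntegral A B G).isIntegral x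
  obtain ⟨q, hq, hdeg, hmonic⟩ := lifts_and_natDegree_eq_and_monic
    (Algebra.IsInvariant.charpoly_mem_lifts A B G x) (MulSemiringAction.monic_charpoly G x)
  have hq0 : aeval x q = 0 := by
    rw [aeval_def, ← eval_map, hq, MulSemiringAction.eval_charpoly]
  have hcard : (MulSemiringAction.charpoly G x).natDegree = Nat.card G := by
    rw [MulSemiringAction.charpoly_eq, natDegree_prod_of_monic _ _ (fun g _ ↦ monic_X_sub_C _)]
    simp
  have hmindeg : (minpoly A x).natDegree = Nat.card G := by
    rw [IsGaloisGroup.card_eq_finrank G K L, ← (minpoly.monic hint).natDegree_map (algebraMap A K),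
      ← minpoly.isIntegrallyClosed_eq_field_fractions K L hint,
      ← Field.primitive_element_iff_minpoly_natDegree_eq, IntermediateField.adjoin_eq_top_iff, hx]
  rw [← hq, eq_of_monic_of_dvd_of_natDegree_le (minpoly.monic hint) hmonic
    (minpoly.isIntegrallyClosed_dvd hint hq0) (by rw [hdeg, hcard, hmindeg])]

lemma aeval_derivative_minpoly_mem_prod_displacementIdeal [IsGaloisGroup G K L]
    [IsGaloisGroup G A B] [DecidableEq G] {x : B} (hx : Algebra.adjoin K {algebraMap B L x} = ⊤) :
    aeval x (derivative (minpoly A x)) ∈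
      ∏ g ∈ Finset.univ.erase (1 : G), displacementIdeal B g := by
  have hprod : aeval x (derivative (minpoly A x)) =
      ∏ g ∈ Finset.univ.erase (1 : G), (x - g • x) := by
    rw [← eval_map_algebraMap, ← derivative_map, map_minpoly_eq_charpoly A K L hx (G := G),
      MulSemiringAction.charpoly_eq, ← Finset.mul_prod_erase _ _ (Finset.mem_univ (1 : G))]
    simp [derivative_mul, eval_prod]
  rw [hprod]
  exact Ideal.prod_mem_prod fun g _ ↦
    sub_mem_comm_iff.mp (smul_sub_mem_displacementIdeal g x)

variable [IsIntegralClosure B A L]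

lemma prod_displacementIdeal_le_differentIdeal [IsGaloisGroup G K L] [SMulDistribClass G B L]
    [IsFractionRing B L] [DecidableEq G] :
    ∏ g ∈ Finset.univ.erase (1 : G), displacementIdeal B g ≤ differentIdeal A B := by
  have := IsGaloisGroup.isGalois G K L
  have := IsGaloisGroup.finiteDimensional G K L
  unfold displacementIdeal
  rw [Ideal.prod_span, Ideal.span_le]
  intro z hz
  obtain ⟨f, hf, rfl⟩ := (Set.mem_finsetProd ..).mp hz
  choose! x hx using fun g (hg : g ∈ Finset.univ.erase (1 : G)) ↦ hf hg
  rw [SetLike.mem_coe, ← Finset.prod_congr rfl hx, ← SetLike.mem_coe,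
    ← (FaithfulSMul.algebraMap_injective B L).mem_set_image]
  change _ ∈ IsLocalization.coeSubmodule L (differentIdeal A B)
  rw [coeSubmodule_differentIdeal A K, Submodule.mem_div_iff_forall_mul_mem]
  intro y hy
  have hmem := sum_prod_mul_smul_mem_one A K L hy x (Finset.univ.erase 1) 1
  have hvanish (h : G) (hh : h ≠ 1) : ∏ g ∈ Finset.univ.erase 1, (g • x g - h • x g) = 0 :=
    Finset.prod_eq_zero (Finset.mem_erase.mpr ⟨hh, Finset.mem_univ h⟩) (sub_self _)
  rw [Finset.sum_eq_single_of_mem 1 (Finset.mem_univ 1)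
    fun h _ hh ↦ by rw [hvanish h hh, map_zero, zero_mul]] at hmem
  simpa using hmem

theorem differentIdeal_eq_prod_displacementIdeal [IsGaloisGroup G K L] [IsGaloisGroup G A B]
    [SMulDistribClass G B L] [IsFractionRing B L] [DecidableEq G]
    (h : ∀ P : Ideal B, P.IsMaximal → ∃ x : B, ¬ conductor A x ≤ P) :
    differentIdeal A B = ∏ g ∈ Finset.univ.erase (1 : G), displacementIdeal B g := by
  have := IsGaloisGroup.isGalois G K L
  have := IsGaloisGroup.finiteDimensional G K L
  refine le_antisymm (fun d hd ↦ ?_) (prod_displacementIdeal_le_differentIdeal A K L)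
  set J := ∏ g ∈ Finset.univ.erase (1 : G), displacementIdeal B g
  suffices hcolon : J.colon {d} = ⊤ by
    simpa using Submodule.mem_colon_singleton.mp ((Ideal.eq_top_iff_one _).mp hcolon)
  by_contra hne
  obtain ⟨P, hPmax, hJP⟩ := Ideal.exists_le_maximal _ hne
  obtain ⟨x, hx⟩ := h P hPmax
  have hgen := adjoin_eq_top_of_conductor_ne_bot A K L (x := x) fun h0 ↦ hx (h0 ▸ bot_le)
  refine hx fun s hs ↦ hJP (Submodule.mem_colon_singleton.mpr ?_)
  have hsd : s * d ∈ Ideal.span {aeval x (derivative (minpoly A x))} :=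
    conductor_mul_differentIdeal A K L x hgen ▸ Ideal.mul_mem_mul hs hd
  exact (Ideal.span_singleton_le_iff_mem _).mpr
    (aeval_derivative_minpoly_mem_prod_displacementIdeal A K L hgen) hsd

end Different

section NumberField

variable (K L : Type*) [Field K] [NumberField K] [Field L] [NumberField L] [Algebra K L]

attribute [local instance] Ideal.Quotient.field in
lemma exists_not_conductor_ringOfIntegers_le (P : Ideal (𝓞 L)) [P.IsMaximal] :
    ∃ x : 𝓞 L, ¬ conductor (𝓞 K) x ≤ P := by
  have hP : P ≠ ⊥ := Ring.ne_bot_of_isMaximal_of_not_isField ‹_›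
    (NumberField.RingOfIntegers.not_isField L)
  have : (P.under (𝓞 K)).IsMaximal := inferInstance
  have : Finite (𝓞 K ⧸ P.under (𝓞 K)) := Ideal.finiteQuotientOfFreeOfNeBot _
    (Ideal.under_ne_bot _ hP)
  exact exists_not_conductor_le P hP

variable {G : Type*} [Group G]

open scoped Classical in
/-- The absolute norm of the displacement ideal of `g` on the ring of integers of `L`, with the
value `1` instead of `0` at `g = 1`, where the ideal vanishes. -/
noncomputable def displacementNorm [MulSemiringAction G L] (g : G) : ℕ :=
  if g = 1 then 1 else Ideal.absNorm (displacementIdeal (𝓞 L) g)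

lemma displacementNorm_conj [MulSemiringAction G L] (k g : G) :
    displacementNorm L (k * g * k⁻¹) = displacementNorm L g := by
  by_cases hg : g = 1 <;> simp [displacementNorm, hg, absNorm_displacementIdeal_conj]

lemma displacementNorm_subgroup_coe [MulSemiringAction G L] {H : Subgroup G} (h : H) :
    displacementNorm L h = displacementNorm L (h : G) := by
  by_cases hh : h = 1
  · simp [displacementNorm, hh]
  · rw [displacementNorm, displacementNorm, if_neg hh, if_neg (OneMemClass.coe_eq_one.not.mpr hh)]
    rfl

lemma natAbs_discr_eq_prod_displacementNorm_mul [Fintype G] [MulSemiringAction G L]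
    [IsGaloisGroup G K L] : (NumberField.discr L).natAbs =
      (∏ g : G, displacementNorm L g) * (NumberField.discr K).natAbs ^ Module.finrank K L := by
  classical
  rw [NumberField.natAbs_discr_eq_absNorm_differentIdeal_mul_natAbs_discr_pow K (𝓞 K) L (𝓞 L),
    differentIdeal_eq_prod_displacementIdeal (G := G) (𝓞 K) K L
      fun P _ ↦ exists_not_conductor_ringOfIntegers_le K L P,
    map_prod, ← Finset.mul_prod_erase Finset.univ _ (Finset.mem_univ 1), displacementNorm,
    if_pos rfl, one_mul]
  congr 1
  exact Finset.prod_congr rfl fun g hg ↦ (if_neg (Finset.ne_of_mem_erase hg)).symm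

end NumberField

section FixedPoints

open MulAction

variable {G X : Type*} [Group G] [MulAction G X]

lemma card_fixedBy_conj (k g : G) :
    Nat.card (fixedBy X (k * g * k⁻¹)) = Nat.card (fixedBy X g) := by
  rw [← smul_fixedBy]
  exact Nat.card_congr ((toPerm k).image _).symm

lemma prod_stabilizer_smul {M : Type*} [CommMonoid M] {f : G → M}
    (hf : ∀ k g, f (k * g * k⁻¹) = f g) (k : G) (x : X) [Fintype (stabilizer G x)]
    [Fintype (stabilizer G (k • x))] :
    ∏ h : stabilizer G (k • x), f h = ∏ h : stabilizer G x, f h := by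
  refine (Fintype.prod_equiv (stabilizerEquivStabilizer (g := k) rfl).toEquiv _ _ fun h ↦ ?_).symm
  simp [stabilizerEquivStabilizer_apply, hf]

theorem prod_stabilizer_pow_card [Fintype G] [Finite X] [IsPretransitive G X] {M : Type*}
    [CommMonoid M] {f : G → M} (hf : ∀ k g, f (k * g * k⁻¹) = f g) (x : X)
    [Fintype (stabilizer G x)] :
    (∏ h : stabilizer G x, f h) ^ Nat.card X = ∏ g : G, f g ^ Nat.card (fixedBy X g) := by
  classical
  have := Fintype.ofFinite X
  have hstab (y : X) : ∏ g : G with g • y = y, f g = ∏ h : stabilizer G x, f h := by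
    obtain ⟨k, rfl⟩ := exists_smul_eq G x y
    rw [← prod_stabilizer_smul hf k x]
    exact Finset.prod_subtype _ (by simp) f
  calc (∏ h : stabilizer G x, f h) ^ Nat.card X
      = ∏ y : X, ∏ g : G with g • y = y, f g := by simp [hstab]
    _ = ∏ g : G, ∏ y : X with g • y = y, f g := by
      simp only [Finset.prod_filter]
      exact Finset.prod_comm
    _ = ∏ g : G, f g ^ Nat.card (fixedBy X g) := by
      refine Finset.prod_congr rfl fun g _ ↦ ?_
      rw [Finset.prod_const, Nat.card_eq_fintype_card]
      exact congrArg _ (Fintype.card_subtype _).symm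

lemma sum_card_fixedBy_eq_card [Fintype G] [Finite X] [Nonempty X] [IsPretransitive G X] :
    ∑ g : G, Nat.card (fixedBy X g) = Nat.card G := by
  classical
  have := Fintype.ofFinite X
  have : Fintype (Quotient (orbitRel G X)) := Fintype.ofFinite _
  have horbits : Fintype.card (Quotient (orbitRel G X)) = 1 := by
    rw [← Nat.card_eq_fintype_card, Nat.card_eq_one_iff_unique]
    exact ⟨(pretransitive_iff_subsingleton_quotient G X).mp ‹_›, ⟨⟦Classical.arbitrary X⟧⟩⟩
  simp only [Nat.card_eq_fintype_card]
  rw [sum_card_fixedBy_eq_card_orbits_mul_card_group, horbits, one_mul]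

lemma card_modEq_card_fixedBy [Finite X] {p n : ℕ} [Fact p.Prime] {g : G} (hg : g ^ p ^ n = 1) :
    Nat.card X ≡ Nat.card (fixedBy X g) [MOD p] := by
  have hp : IsPGroup p (Subgroup.zpowers g) := by
    rintro ⟨_, k, rfl⟩
    have hpow : (g ^ k) ^ p ^ n = 1 := by
      rw [← zpow_natCast, zpow_comm, zpow_natCast, hg, one_zpow]
    exact ⟨n, Subtype.ext hpow⟩
  convert hp.card_modEq_card_fixedPoints X using 3
  ext x
  rw [← mem_fixedBy_zpowers_iff_mem_fixedBy]
  simp [mem_fixedPoints, Subgroup.smul_def]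

lemma smul_eq_of_mem_center [IsPretransitive G X] {z : G} (hz : z ∈ Subgroup.center G) {x : X}
    (hx : z • x = x) (y : X) : z • y = y := by
  obtain ⟨g, rfl⟩ := exists_smul_eq G x y
  rw [← mul_smul, ← Subgroup.mem_center_iff.mp hz g, mul_smul, hx]

lemma smul_eq_of_mem_center_of_pow_eq_one [Finite X] [IsPretransitive G X] {p n : ℕ}
    [Fact p.Prime] (hX : ¬ p ∣ Nat.card X) {z : G} (hz : z ∈ Subgroup.center G)
    (hpow : z ^ p ^ n = 1) (y : X) : z • y = y := by
  have hne : Nat.card (fixedBy X z) ≠ 0 := fun h0 ↦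
    hX ((Nat.modEq_zero_iff_dvd).mp (h0 ▸ card_modEq_card_fixedBy hpow))
  obtain ⟨x, hx⟩ := (Nat.card_ne_zero.mp hne).1
  exact smul_eq_of_mem_center hz hx y

lemma eq_one_of_pow_eq_one_of_smul_eq {g : G} {n : ℕ} (hg : g ^ n = 1) {x : X}
    (hcop : n.Coprime (Nat.card (stabilizer G x))) (hx : g • x = x) : g = 1 :=
  orderOf_eq_one_iff.mp <| Nat.eq_one_of_dvd_coprimes hcop (orderOf_dvd_of_pow_eq_one hg)
    (Subgroup.orderOf_dvd_natCard _ hx)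

end FixedPoints

section SpecialLinear

open Matrix MulAction

section CommRing

variable {R : Type*} [CommRing R]

/-- The companion matrix of `X² - t X + 1`. -/
def companion (t : R) : SL(2, R) := ⟨!![0, -1; 1, t], by simp [det_fin_two_of]⟩

/-- The trace of an element of `SL(2, R)`. -/
def slTrace (x : SL(2, R)) : R := (x : Matrix (Fin 2) (Fin 2) R).trace

lemma slTrace_eq (x : SL(2, R)) : slTrace x = x 0 0 + x 1 1 := trace_fin_two _

lemma slTrace_companion (t : R) : slTrace (companion t) = t := by
  rw [slTrace_eq]
  simp [companion]

lemma slTrace_neg (x : SL(2, R)) : slTrace (-x) = -slTrace x := by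
  simp [slTrace]

lemma slTrace_one : slTrace (1 : SL(2, R)) = 2 := by
  simp [slTrace]

-- The quadratic form is the determinant of the matrix with columns `v = (a, b)` and `x v`.
lemma exists_eq_conj_companion (x : SL(2, R)) {a b : R}
    (hab : x 1 0 * a ^ 2 + (x 1 1 - x 0 0) * a * b - x 0 1 * b ^ 2 = 1) :
    ∃ p : SL(2, R), x = p * companion (slTrace x) * p⁻¹ := by
  have hdet : x 0 0 * x 1 1 - x 0 1 * x 1 0 = 1 := det_fin_two x.1 ▸ x.2
  let p : SL(2, R) := ⟨!![a, x 0 0 * a + x 0 1 * b; b, x 1 0 * a + x 1 1 * b], by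
    rw [det_fin_two_of]
    linear_combination hab⟩
  refine ⟨p, eq_mul_inv_of_mul_eq (Matrix.SpecialLinearGroup.ext _ _ fun i j ↦ ?_)⟩
  rw [Matrix.SpecialLinearGroup.coe_mul, Matrix.SpecialLinearGroup.coe_mul, Matrix.mul_apply,
    Matrix.mul_apply, slTrace_eq]
  fin_cases i <;> fin_cases j <;> simp [p, companion]
  · linear_combination (-a) * hdet
  · linear_combination (-b) * hdet

lemma pow_eq_one_of_trace_eq_two {p : ℕ} [Fact p.Prime] [CharP R p] {x : SL(2, R)}
    (hx : slTrace x = 2) : x ^ p = 1 := by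
  have : Nontrivial R := CharP.nontrivial_of_char_ne_one (Fact.out : p.Prime).ne_one
  have hsq : ((x : Matrix (Fin 2) (Fin 2) R) - 1) ^ 2 = 0 := by
    have hcharpoly := aeval_self_charpoly (x : Matrix (Fin 2) (Fin 2) R)
    rw [charpoly_fin_two, ← slTrace, hx, x.det_coe] at hcharpoly
    simp only [map_sub, map_add, map_mul, map_pow, Polynomial.aeval_X, map_ofNat,
      map_one] at hcharpoly
    rw [← hcharpoly]
    noncomm_ring
  have hpow := pow_eq_zero_of_le (Fact.out : p.Prime).two_le hsq
  rw [sub_pow_char_of_commute (p := p) (Commute.one_right _), one_pow, sub_eq_zero] at hpow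
  exact Subtype.ext hpow

end CommRing

lemma exists_quadratic_form_eq_one : ∀ A B C : ZMod 7, B ^ 2 + 4 * A * C ≠ 0 →
    ∃ a b : ZMod 7, A * a ^ 2 + B * a * b - C * b ^ 2 = 1 := by
  decide +kernel

lemma exists_eq_conj_companion_of_trace_sq_ne_four {x : SL(2, ZMod 7)} (hx : slTrace x ^ 2 ≠ 4) :
    ∃ p : SL(2, ZMod 7), x = p * companion (slTrace x) * p⁻¹ := by
  have hdet : x 0 0 * x 1 1 - x 0 1 * x 1 0 = 1 := det_fin_two x.1 ▸ x.2
  obtain ⟨a, b, hab⟩ := exists_quadratic_form_eq_one (x 1 0) (x 1 1 - x 0 0) (x 0 1) fun h0 ↦ by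
    rw [slTrace_eq] at hx
    exact hx (by linear_combination h0 + 4 * hdet)
  exact exists_eq_conj_companion x hab

lemma card_trace_eq : ∀ t : ZMod 7, Finset.card {x : SL(2, ZMod 7) | slTrace x = t} =
    if t ^ 2 = 4 then 49 else if t ^ 2 = 1 then 56 else 42 := by
  decide +kernel

lemma card_specialLinearGroup_two_zmod_seven : Nat.card SL(2, ZMod 7) = 336 := by
  rw [Nat.card_eq_fintype_card]
  decide +kernel

lemma sum_zmod_seven (f : ZMod 7 → ℕ) :
    ∑ t, f t = f 0 + (f 1 + f (-1)) + (f 2 + f (-2)) + (f 3 + f (-3)) := by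
  refine (Fin.sum_univ_seven f).trans ?_
  change f 0 + f 1 + f 2 + f 3 + f (-3) + f (-2) + f (-1) = _
  ring

lemma companion_three_pow_eight : companion (3 : ZMod 7) ^ 8 = 1 := by
  decide +kernel

variable {X : Type*} [MulAction SL(2, ZMod 7) X]

lemma card_fixedBy_eq_companion {x : SL(2, ZMod 7)} (hx : slTrace x ^ 2 ≠ 4) :
    Nat.card (fixedBy X x) = Nat.card (fixedBy X (companion (slTrace x))) := by
  obtain ⟨p, hp⟩ := exists_eq_conj_companion_of_trace_sq_ne_four hx
  conv_lhs => rw [hp, card_fixedBy_conj]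

lemma sum_card_fixedBy_of_trace_eq {t : ZMod 7} (ht : t ^ 2 ≠ 4) :
    ∑ x : SL(2, ZMod 7) with slTrace x = t, Nat.card (fixedBy X x) =
      (if t ^ 2 = 1 then 56 else 42) * Nat.card (fixedBy X (companion t)) := by
  have hcard := card_trace_eq t
  rw [if_neg ht] at hcard
  rw [← hcard, ← smul_eq_mul]
  refine Finset.sum_eq_card_nsmul fun x hx ↦ ?_
  rw [Finset.mem_filter] at hx
  rw [card_fixedBy_eq_companion (by rwa [hx.2]), hx.2]

variable [IsPretransitive SL(2, ZMod 7) X]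

lemma neg_one_smul_eq_self (hX : Nat.card X = 7) (y : X) : (-1 : SL(2, ZMod 7)) • y = y := by
  have : Finite X := Nat.finite_of_card_ne_zero (by lia)
  refine smul_eq_of_mem_center_of_pow_eq_one (p := 2) (n := 1) (by lia) ?_ (by simp) y
  simp [Subgroup.mem_center_iff]

lemma card_fixedBy_neg (hX : Nat.card X = 7) (x : SL(2, ZMod 7)) :
    Nat.card (fixedBy X (-x)) = Nat.card (fixedBy X x) := by
  congr 2
  ext y
  rw [mem_fixedBy, mem_fixedBy, ← neg_one_mul, mul_smul, neg_one_smul_eq_self hX]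

lemma card_fixedBy_of_trace_eq_two (hX : Nat.card X = 7) {x : SL(2, ZMod 7)}
    (hx : slTrace x = 2) (hx1 : x ≠ 1) : Nat.card (fixedBy X x) = 0 := by
  have : Fact (Nat.Prime 7) := ⟨by norm_num⟩
  rw [Nat.card_eq_zero]
  refine .inl ⟨fun ⟨y, hy⟩ ↦ hx1 ?_⟩
  have hstab : Nat.card (stabilizer SL(2, ZMod 7) y) = 48 := by
    have := (stabilizer SL(2, ZMod 7) y).card_mul_index
    rw [index_stabilizer_of_transitive, hX, card_specialLinearGroup_two_zmod_seven] at this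
    lia
  exact eq_one_of_pow_eq_one_of_smul_eq (pow_eq_one_of_trace_eq_two hx)
    (by rw [hstab]; norm_num) hy

lemma sum_card_fixedBy_of_trace_eq_two (hX : Nat.card X = 7) :
    ∑ x : SL(2, ZMod 7) with slTrace x = 2, Nat.card (fixedBy X x) = 7 := by
  rw [Finset.sum_eq_single_of_mem 1 (by simp [slTrace_one])
    fun x hx ↦ card_fixedBy_of_trace_eq_two hX (Finset.mem_filter.mp hx).2]
  simp [hX]

lemma sum_card_fixedBy_of_trace_eq_neg (hX : Nat.card X = 7) (t : ZMod 7) :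
    ∑ x : SL(2, ZMod 7) with slTrace x = -t, Nat.card (fixedBy X x) =
      ∑ x : SL(2, ZMod 7) with slTrace x = t, Nat.card (fixedBy X x) := by
  refine Finset.sum_equiv (Equiv.neg _) (fun x ↦ ?_) fun x _ ↦ (card_fixedBy_neg hX x).symm
  simp [slTrace_neg, neg_eq_iff_eq_neg]

lemma card_fixedBy_companion_neg (hX : Nat.card X = 7) {t : ZMod 7} (ht : t ^ 2 ≠ 4) :
    Nat.card (fixedBy X (companion (-t))) = Nat.card (fixedBy X (companion t)) := by
  have htrace : slTrace (-companion t) = -t := by rw [slTrace_neg, slTrace_companion]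
  rw [← card_fixedBy_neg hX (companion t), card_fixedBy_eq_companion (x := -companion t)
    (by rwa [htrace, neg_sq]), htrace]

lemma card_fixedBy_companion (hX : Nat.card X = 7) {t : ZMod 7} (ht : t ^ 2 ≠ 4) :
    Nat.card (fixedBy X (companion t)) = if t = 0 then 3 else 1 := by
  have : Finite X := Nat.finite_of_card_ne_zero (by lia)
  have : Nonempty X := (Nat.card_ne_zero.mp (by lia)).1
  have hodd : Nat.card (fixedBy X (companion (3 : ZMod 7))) % 2 = 1 := by
    have := card_modEq_card_fixedBy (X := X) (p := 2) (n := 3) companion_three_pow_eight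
    rwa [hX, Nat.ModEq, eq_comm] at this
  have hburnside := sum_card_fixedBy_eq_card (G := SL(2, ZMod 7)) (X := X)
  rw [card_specialLinearGroup_two_zmod_seven, ← Finset.sum_fiberwise _ slTrace,
    sum_zmod_seven] at hburnside
  simp only [sum_card_fixedBy_of_trace_eq_neg hX, sum_card_fixedBy_of_trace_eq_two hX] at hburnside
  rw [sum_card_fixedBy_of_trace_eq (t := 0) (by decide), if_neg (by decide),
    sum_card_fixedBy_of_trace_eq (t := 1) (by decide), if_pos (by decide),
    sum_card_fixedBy_of_trace_eq (t := 3) (by decide), if_neg (by decide)] at hburnside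
  -- `42 χ(0) + 112 χ(1) + 84 χ(3) = 322` with `χ(3)` odd forces `χ = (3, 1, 1)`.
  obtain ⟨h0, h1, h3⟩ : Nat.card (fixedBy X (companion (0 : ZMod 7))) = 3 ∧
      Nat.card (fixedBy X (companion (1 : ZMod 7))) = 1 ∧
      Nat.card (fixedBy X (companion (3 : ZMod 7))) = 1 := by lia
  have hcases : ∀ t : ZMod 7, t ^ 2 ≠ 4 → t = 0 ∨ t = 1 ∨ t = -1 ∨ t = 3 ∨ t = -3 := by decide
  obtain rfl | rfl | rfl | rfl | rfl := hcases t ht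
  · exact h0
  · exact h1
  · rw [card_fixedBy_companion_neg hX (by decide), h1]; rfl
  · exact h3
  · rw [card_fixedBy_companion_neg hX (by decide), h3]; rfl

theorem card_fixedBy_of_card_eq_seven (hX : Nat.card X = 7) (x : SL(2, ZMod 7)) :
    Nat.card (fixedBy X x) = if x = 1 ∨ x = -1 then 7 else
      if slTrace x ^ 2 = 4 then 0 else if slTrace x = 0 then 3 else 1 := by
  have hone : Nat.card (fixedBy X (1 : SL(2, ZMod 7))) = 7 := by simp [hX]
  by_cases hx : x = 1 ∨ x = -1
  · rw [if_pos hx]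
    obtain rfl | rfl := hx
    exacts [hone, (card_fixedBy_neg hX 1).trans hone]
  rw [if_neg hx]
  push Not at hx
  by_cases htr : slTrace x ^ 2 = 4
  · have hroots : ∀ t : ZMod 7, t ^ 2 = 4 → t = 2 ∨ -t = 2 := by decide
    rw [if_pos htr]
    obtain htr | htr := hroots _ htr
    · exact card_fixedBy_of_trace_eq_two hX htr hx.1
    · rw [← card_fixedBy_neg hX, card_fixedBy_of_trace_eq_two hX (slTrace_neg x ▸ htr)
        (neg_eq_iff_eq_neg.not.mpr hx.2)]
  · rw [if_neg htr, card_fixedBy_eq_companion htr, card_fixedBy_companion hX htr]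

lemma card_fixedBy_eq_of_card_eq_seven {G X Y : Type*} [Group G] [MulAction G X] [MulAction G Y]
    [IsPretransitive G X] [IsPretransitive G Y] {φ : SL(2, ZMod 7) →* G}
    (hφ : Function.Surjective φ) (hX : Nat.card X = 7) (hY : Nat.card Y = 7) (g : G) :
    Nat.card (fixedBy X g) = Nat.card (fixedBy Y g) := by
  let _ := compHom X φ
  let _ := compHom Y φ
  have := isPretransitive_compHom (G := X) hφ
  have := isPretransitive_compHom (G := Y) hφ
  obtain ⟨x, rfl⟩ := hφ g
  exact (card_fixedBy_of_card_eq_seven hX x).trans (card_fixedBy_of_card_eq_seven hY x).symm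

end SpecialLinear

section Embeddings

open MulAction

section Action

variable {F E N : Type*} [Field F] [Field E] [Field N] [Algebra F E] [Algebra F N]

/-- The Galois group of `N / F` acts on the embeddings of an extension `E / F` into `N` by
postcomposition. -/
instance embeddingMulAction : MulAction (N ≃ₐ[F] N) (E →ₐ[F] N) where
  smul σ f := (σ : N →ₐ[F] N).comp f
  one_smul _ := rfl
  mul_smul _ _ _ := rfl

lemma embedding_smul_apply (σ : N ≃ₐ[F] N) (f : E →ₐ[F] N) (x : E) : (σ • f) x = σ (f x) := rfl

variable (F E N) [Algebra E N] [IsScalarTower F E N]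

instance isPretransitive_embedding [Normal F N] : IsPretransitive (N ≃ₐ[F] N) (E →ₐ[F] N) := by
  refine (isPretransitive_iff_base (IsScalarTower.toAlgHom F E N)).mpr fun f ↦
    ⟨AlgEquiv.ofBijective (f.liftNormal N) (AlgHom.normal_bijective F N N _), ?_⟩
  ext x
  exact f.liftNormal_commutes N x

lemma card_embedding_eq_finrank [FiniteDimensional F N] [IsGalois F N] :
    Nat.card (E →ₐ[F] N) = Module.finrank F E := by
  have := FiniteDimensional.left F E N
  have := Algebra.isSeparable_tower_bot_of_isSeparable F E N
  rw [Nat.card_eq_fintype_card]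
  refine AlgHom.card_of_splits F E N fun x ↦ ?_
  rw [← minpoly.algebraMap_eq (algebraMap E N).injective x]
  exact Normal.splits inferInstance _

instance isGaloisGroup_stabilizer [FiniteDimensional F N] [IsGalois F N] :
    IsGaloisGroup (stabilizer (N ≃ₐ[F] N) (IsScalarTower.toAlgHom F E N)) E N where
  faithful := inferInstance
  commutes := ⟨fun σ e x ↦ by
    have hσ : σ.1 (algebraMap E N e) = algebraMap E N e := AlgHom.congr_fun σ.2 e
    rw [Algebra.smul_def, Algebra.smul_def, smul_mul', Subgroup.smul_def, AlgEquiv.smul_def, hσ]⟩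
  isInvariant := ⟨fun x hx ↦ by
    have := FiniteDimensional.right F E N
    have := IsGalois.tower_top_of_isGalois F E N
    refine (IsGalois.mem_range_algebraMap_iff_fixed x).mpr fun σ ↦ ?_
    exact hx ⟨σ.restrictScalars F, AlgHom.ext σ.commutes⟩⟩

end Action

lemma isReal_comp_iff_mem_fixedBy {F K N : Type*} [Field F] [Field K] [Field N] [Algebra F K]
    [Algebra F N] {τ : N →+* ℂ} {c : N ≃ₐ[F] N} (hc : NumberField.ComplexEmbedding.IsConj τ c)
    (f : K →ₐ[F] N) :
    NumberField.ComplexEmbedding.IsReal (τ.comp (f : K →+* N)) ↔ f ∈ fixedBy (K →ₐ[F] N) c := by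
  rw [mem_fixedBy, AlgHom.ext_iff, NumberField.ComplexEmbedding.isReal_iff, RingHom.ext_iff]
  refine forall_congr' fun x ↦ ?_
  rw [embedding_smul_apply, ← τ.injective.eq_iff, hc.eq]
  rfl

lemma exists_isConj {N : Type*} [Field N] [Algebra ℚ N] [IsGalois ℚ N] (τ : N →+* ℂ) :
    ∃ c : N ≃ₐ[ℚ] N, NumberField.ComplexEmbedding.IsConj τ c := by
  obtain ⟨σ, hσ⟩ := NumberField.ComplexEmbedding.exists_comp_symm_eq_of_comp_eq (k := ℚ) τ
    (NumberField.ComplexEmbedding.conjugate τ) (Subsingleton.elim _ _)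
  exact ⟨σ.symm, hσ.symm⟩

variable {N : Type*} [Field N] [NumberField N] [IsGalois ℚ N]
  (K : Type*) [Field K] [NumberField K] [Algebra K N]

theorem natAbs_discr_pow_finrank : (NumberField.discr N).natAbs ^ Module.finrank ℚ K =
    (∏ σ : N ≃ₐ[ℚ] N, displacementNorm N σ ^ Nat.card (fixedBy (K →ₐ[ℚ] N) σ)) *
      (NumberField.discr K).natAbs ^ Module.finrank ℚ N := by
  classical
  let G := stabilizer (N ≃ₐ[ℚ] N) (IsScalarTower.toAlgHom ℚ K N)
  rw [natAbs_discr_eq_prod_displacementNorm_mul K N (G := G), mul_pow, ← pow_mul,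
    mul_comm (Module.finrank K N), Module.finrank_mul_finrank,
    ← prod_stabilizer_pow_card (displacementNorm_conj N) (IsScalarTower.toAlgHom ℚ K N),
    card_embedding_eq_finrank]
  simp only [G, displacementNorm_subgroup_coe]

lemma bijective_embedding_comp (τ : N →+* ℂ) :
    Function.Bijective fun f : K →ₐ[ℚ] N ↦ τ.comp (f : K →+* N) := by
  refine (Fintype.bijective_iff_injective_and_card _).mpr ⟨fun f g hfg ↦ ?_, ?_⟩
  · ext x
    exact τ.injective (RingHom.congr_fun hfg x)
  · rw [NumberField.Embeddings.card, ← Nat.card_eq_fintype_card, card_embedding_eq_finrank]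

lemma nrRealPlaces_eq_card_fixedBy {τ : N →+* ℂ} {c : N ≃ₐ[ℚ] N}
    (hc : NumberField.ComplexEmbedding.IsConj τ c) :
    NumberField.InfinitePlace.nrRealPlaces K = Nat.card (fixedBy (K →ₐ[ℚ] N) c) := by
  classical
  rw [← NumberField.InfinitePlace.card_real_embeddings, ← Nat.card_eq_fintype_card]
  exact (Nat.card_congr ((Equiv.ofBijective _ (bijective_embedding_comp K τ)).subtypeEquiv
    fun f ↦ (isReal_comp_iff_mem_fixedBy hc f).symm)).symm

variable {K} {K' : Type*} [Field K'] [NumberField K'] [Algebra K' N]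

lemma finrank_eq_of_card_fixedBy_eq (h : ∀ σ : N ≃ₐ[ℚ] N,
    Nat.card (fixedBy (K →ₐ[ℚ] N) σ) = Nat.card (fixedBy (K' →ₐ[ℚ] N) σ)) :
    Module.finrank ℚ K = Module.finrank ℚ K' := by
  have hone := h 1
  rwa [fixedBy_one_eq_univ, fixedBy_one_eq_univ, Nat.card_univ, Nat.card_univ,
    card_embedding_eq_finrank, card_embedding_eq_finrank] at hone

lemma natAbs_discr_eq_of_card_fixedBy_eq (h : ∀ σ : N ≃ₐ[ℚ] N,
    Nat.card (fixedBy (K →ₐ[ℚ] N) σ) = Nat.card (fixedBy (K' →ₐ[ℚ] N) σ)) :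
    (NumberField.discr K).natAbs = (NumberField.discr K').natAbs := by
  have hK := natAbs_discr_pow_finrank (N := N) K
  have hne : (NumberField.discr N).natAbs ^ Module.finrank ℚ K ≠ 0 :=
    pow_ne_zero _ (Int.natAbs_ne_zero.mpr (NumberField.discr_ne_zero N))
  have hK' := natAbs_discr_pow_finrank (N := N) K'
  simp only [← finrank_eq_of_card_fixedBy_eq h, ← h] at hK'
  rw [hK] at hne hK'
  exact Nat.pow_left_injective Module.finrank_pos.ne'
    (Nat.eq_of_mul_eq_mul_left (Nat.pos_of_ne_zero (left_ne_zero_of_mul hne)) hK')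

theorem discr_eq_of_card_fixedBy_eq (h : ∀ σ : N ≃ₐ[ℚ] N,
    Nat.card (fixedBy (K →ₐ[ℚ] N) σ) = Nat.card (fixedBy (K' →ₐ[ℚ] N) σ)) :
    NumberField.discr K = NumberField.discr K' := by
  obtain ⟨c, hc⟩ := exists_isConj (Classical.arbitrary (N →+* ℂ))
  have hcomplex : NumberField.InfinitePlace.nrComplexPlaces K =
      NumberField.InfinitePlace.nrComplexPlaces K' := by
    have hK := NumberField.InfinitePlace.card_add_two_mul_card_eq_rank K
    have hK' := NumberField.InfinitePlace.card_add_two_mul_card_eq_rank K'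
    rw [nrRealPlaces_eq_card_fixedBy K hc, finrank_eq_of_card_fixedBy_eq h, h] at hK
    rw [nrRealPlaces_eq_card_fixedBy K' hc] at hK'
    lia
  rw [← Int.sign_mul_natAbs (NumberField.discr K), ← Int.sign_mul_natAbs (NumberField.discr K'),
    NumberField.sign_discr, NumberField.sign_discr, hcomplex, natAbs_discr_eq_of_card_fixedBy_eq h]

end Embeddings

theorem stmt12_general {N K K' : Type*} [Field N] [NumberField N] [IsGalois ℚ N]
    [Field K] [NumberField K] [Algebra K N] [Field K'] [NumberField K'] [Algebra K' N]
    {φ : SL(2, ZMod 7) →* (N ≃ₐ[ℚ] N)} (hφ : Function.Surjective φ)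
    (hK : Module.finrank ℚ K = 7) (hK' : Module.finrank ℚ K' = 7) :
    NumberField.discr K = NumberField.discr K' :=
  discr_eq_of_card_fixedBy_eq <| card_fixedBy_eq_of_card_eq_seven hφ
    ((card_embedding_eq_finrank ℚ K N).trans hK) ((card_embedding_eq_finrank ℚ K' N).trans hK')

/-- If `N/ℚ` is Galois with group `PSL₂(𝔽₇)` and `K₇ₐ`, `K₇ᵦ` are any two subfields of
`N` of degree 7 over `ℚ`, then they have equal discriminants. -/
theorem stmt12 (N : Type) [Field N] [NumberField N] [IsGalois ℚ N]
    (hgal : Nonempty ((N ≃ₐ[ℚ] N) ≃* PSL(2, ZMod 7)))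
    (K₇a K₇b : IntermediateField ℚ N)
    (h7a : Module.finrank ℚ K₇a = 7) (h7b : Module.finrank ℚ K₇b = 7) :
    NumberField.discr K₇a = NumberField.discr K₇b := by
  obtain ⟨ε⟩ := hgal
  exact stmt12_general (φ := ε.symm.toMonoidHom.comp (QuotientGroup.mk' _))
    (ε.symm.surjective.comp (QuotientGroup.mk'_surjective _)) h7a h7b
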